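/- arXiv:1802.07837 — 2 statements merged into one kernel-verified Lean document; each statement's English description precedes it below -/
import Mathlib

section
/- Let n ≥ 4. If K is a subgroup of the hyperoctahedral group Bₙ = C₂ⁿ ⋊ Sₙ of index n, then up to conjugacy K equals C₂ⁿ ⋊ Sₙ₋₁ (the stabilizer of the last coordinate axis in the permutation part), or n = 4 and K = C₂⁴⁺ ⋊ A₄, or n = 6 and K = C₂⁶ ⋊ PGL₂(5). -/
open Equiv SemidirectProduct

/-- The action of permutations on sign vectors by permuting coordinates. -/
def permAction (n : ℕ) : Perm (Fin n) →* MulAut (Fin n → ℤˣ) where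
  toFun σ := MulEquiv.arrowCongr σ (MulEquiv.refl ℤˣ)
  map_one' := by ext v i; rfl
  map_mul' σ τ := by ext v i; rfl

/-- The hyperoctahedral group `Bₙ = C₂ⁿ ⋊ Sₙ` as a semidirect product. -/
abbrev HyperOct (n : ℕ) := (Fin n → ℤˣ) ⋊[permAction n] Perm (Fin n)

/-- The product-of-signs homomorphism `C₂ⁿ → {±1}`. -/
def prodHom (n : ℕ) : (Fin n → ℤˣ) →* ℤˣ := ∏ i : Fin n, Pi.evalMonoidHom (fun _ => ℤˣ) i

/-- The subgroup `C₂ⁿ⁺` of even sign vectors (an even number of `-1` entries). -/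
def evenSign (n : ℕ) : Subgroup (Fin n → ℤˣ) := (prodHom n).ker

/-- The subgroup `V ⋊ P` of `Bₙ` determined by a subgroup `V` of sign vectors and a
subgroup `P` of permutations. -/
def mix {n : ℕ} (V : Subgroup (Fin n → ℤˣ)) (P : Subgroup (Perm (Fin n))) :
    Subgroup (HyperOct n) :=
  V.map (inl : _ →* HyperOct n) ⊔ P.map (inr : _ →* HyperOct n)


instance : Fact (Nat.Prime 5) := ⟨by norm_num⟩

abbrev ProjLine5 := Projectivization (ZMod 5) (Fin 2 → ZMod 5)

/-- The linear automorphism of `GF(5)²` given by a matrix in `GL₂(GF(5))`. -/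
noncomputable def glLin : GL (Fin 2) (ZMod 5) →* ((Fin 2 → ZMod 5) ≃ₗ[ZMod 5] (Fin 2 → ZMod 5)) :=
  (LinearMap.GeneralLinearGroup.generalLinearEquiv (ZMod 5) (Fin 2 → ZMod 5)).toMonoidHom.comp
    (Matrix.GeneralLinearGroup.toLin).toMonoidHom

lemma glLin_comp (g h : GL (Fin 2) (ZMod 5)) :
    (glLin g).toLinearMap.comp (glLin h).toLinearMap = (glLin (g * h)).toLinearMap := by
  ext v
  simp [map_mul]

lemma glLin_one : (glLin (1 : GL (Fin 2) (ZMod 5))).toLinearMap = LinearMap.id := by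
  ext v
  simp [map_one]

lemma pmap_congr {A B : (Fin 2 → ZMod 5) →ₗ[ZMod 5] (Fin 2 → ZMod 5)}
    (hA : Function.Injective A) (hB : Function.Injective B) (hAB : A = B) :
    Projectivization.map A hA = Projectivization.map B hB := by
  subst hAB; rfl

/-- The permutation of the projective line `ℙ¹(GF(5))` induced by an element of
`GL₂(GF(5))`. -/
noncomputable def glPerm (g : GL (Fin 2) (ZMod 5)) : Equiv.Perm ProjLine5 where
  toFun := Projectivization.map (glLin g).toLinearMap (glLin g).injective
  invFun := Projectivization.map (glLin g⁻¹).toLinearMap (glLin g⁻¹).injective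
  left_inv x := by
    have key : (Projectivization.map (glLin g⁻¹).toLinearMap (glLin g⁻¹).injective) ∘
        (Projectivization.map (glLin g).toLinearMap (glLin g).injective) = id := by
      rw [← Projectivization.map_comp,
        pmap_congr _
          (glLin (g⁻¹ * g)).injective (glLin_comp g⁻¹ g),
        pmap_congr (glLin (g⁻¹ * g)).injective (glLin 1).injective (by rw [inv_mul_cancel]),
        pmap_congr (glLin 1).injective Function.injective_id glLin_one,
        Projectivization.map_id]
    exact congrFun key x
  right_inv x := by
    have key : (Projectivization.map (glLin g).toLinearMap (glLin g).injective) ∘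
        (Projectivization.map (glLin g⁻¹).toLinearMap (glLin g⁻¹).injective) = id := by
      rw [← Projectivization.map_comp,
        pmap_congr _
          (glLin (g * g⁻¹)).injective (glLin_comp g g⁻¹),
        pmap_congr (glLin (g * g⁻¹)).injective (glLin 1).injective (by rw [mul_inv_cancel]),
        pmap_congr (glLin 1).injective Function.injective_id glLin_one,
        Projectivization.map_id]
    exact congrFun key x

/-- The action homomorphism `GL₂(GF(5)) → Sym(ℙ¹(GF(5)))`; its image is `PGL₂(5)` acting
on the projective line. -/
noncomputable def glPermHom : GL (Fin 2) (ZMod 5) →* Equiv.Perm ProjLine5 where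
  toFun := glPerm
  map_one' := by
    ext x
    show Projectivization.map (glLin 1).toLinearMap (glLin 1).injective x = x
    rw [pmap_congr (glLin 1).injective Function.injective_id glLin_one,
      Projectivization.map_id]
    rfl
  map_mul' g h := by
    ext x
    show Projectivization.map (glLin (g * h)).toLinearMap (glLin (g * h)).injective x = _
    have key : Projectivization.map (glLin (g * h)).toLinearMap (glLin (g * h)).injective =
        (Projectivization.map (glLin g).toLinearMap (glLin g).injective) ∘
          (Projectivization.map (glLin h).toLinearMap (glLin h).injective) := by
      rw [← Projectivization.map_comp,
        pmap_congr _
          (glLin (g * h)).injective (glLin_comp g h)]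
    exact congrFun key x

/-- Transport of permutation groups along a bijection, as a group homomorphism. -/
def permCongrHom {α β : Type*} (f : α ≃ β) : Equiv.Perm α →* Equiv.Perm β where
  toFun σ := f.symm.trans (σ.trans f)
  map_one' := by ext x; simp
  map_mul' σ τ := by ext x; simp

/-- The copy of `PGL₂(5)` inside the symmetric group on `Fin n`, obtained from an
identification `f` of the `n` points with the projective line over `GF(5)`. -/
noncomputable def pglSubgroup {n : ℕ} (f : Fin n ≃ ProjLine5) : Subgroup (Equiv.Perm (Fin n)) :=
  glPermHom.range.map (permCongrHom f.symm)

/-! Let `P` be the image of `K` in `Sₙ` and `W = K ∩ C₂ⁿ`, so that `[Sₙ : P] [C₂ⁿ : W] = n`.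

If `W = C₂ⁿ`, then `K = C₂ⁿ ⋊ P` with `P` of index `n` in `Sₙ`. For `n ≥ 5` the action of `Sₙ` on
the cosets of `P` amounts to an automorphism of `Sₙ` carrying a point stabilizer to `P`. An
automorphism preserves the orders of centralizers, so it maps transpositions to transpositions, in
which case `P` is itself a point stabilizer, or else `n = 6` and transpositions become products of
three disjoint ones. Two automorphisms of the latter kind differ by one that preserves
transpositions, so the subgroups `P` arising from them form a single conjugacy class, which is that
of the transitive group `PGL₂(5)`.

If `W ≠ C₂ⁿ`, then `P` has index at most `n / 2` and therefore contains `Aₙ`. The `Aₙ`-invariant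
subgroup `W`, being too large to consist of constant vectors, is then `C₂ⁿ⁺`, whence `n = 4` and
`P = A₄`. The product of all signs is a character of `K` that is trivial on `W`, hence also on the
elements of `K` lying over 3-cycles, and these generate `K` modulo `W`; so `K = C₂⁴⁺ ⋊ A₄`. -/

lemma le_choose {n k : ℕ} (hk : 0 < k) (hkn : k < n) : n ≤ n.choose k := by
  induction n generalizing k with
  | zero => lia
  | succ n ih =>
    obtain ⟨k, rfl⟩ := Nat.exists_eq_succ_of_ne_zero hk.ne'
    obtain rfl | hkn' := (Nat.lt_succ_iff.1 hkn).eq_or_lt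
    · rw [Nat.choose_succ_self_right]
    · have := ih (Nat.succ_pos k) hkn'
      rw [Nat.choose_succ_succ]
      have := Nat.choose_pos (n := n) (k := k) (by lia)
      lia

lemma lt_choose {n k : ℕ} (hk : 2 ≤ k) (hkn : k + 2 ≤ n) : n < n.choose k := by
  obtain ⟨k, rfl⟩ := Nat.exists_eq_add_of_le' (show 1 ≤ k by lia)
  obtain ⟨n, rfl⟩ := Nat.exists_eq_add_of_le' (show 1 ≤ n by lia)
  have h₁ := le_choose (n := n) (k := k) (by lia) (by lia)
  have h₂ := le_choose (n := n) (k := k + 1) (by lia) (by lia)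
  rw [Nat.choose_succ_succ]
  lia

lemma eq_one_or_succ_eq_of_choose_dvd {n k : ℕ} (hk : 0 < k) (hkn : k < n)
    (h : n.choose k ∣ n) : k = 1 ∨ k + 1 = n := by
  by_contra! hne
  exact (lt_choose (by lia) (by lia)).not_ge (Nat.le_of_dvd (by lia) h)

section Intransitive

open MulAction
open scoped Pointwise

variable {α : Type*}

lemma le_stabilizer_orbit (H : Subgroup (Perm α)) (x : α) :
    H ≤ stabilizer (Perm α) (orbit H x) :=
  fun h hh ↦ smul_orbit (⟨h, hh⟩ : H) x

variable [Finite α]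

lemma index_stabilizer_set (s : Set α) :
    (stabilizer (Perm α) s).index = (Nat.card α).choose s.ncard := by
  classical
  lift s to Finset α using s.toFinite
  rw [Set.ncard_coe_finset]
  let t : Set.powersetCard α s.card := ⟨s, rfl⟩
  have := Set.powersetCard.isPretransitive (α := α) (n := s.card)
  have ht : stabilizer (Perm α) t = stabilizer (Perm α) (s : Set α) :=
    Set.powersetCard.stabilizer_coe t
  rw [← ht, index_stabilizer_of_transitive, Set.powersetCard.card]

lemma eq_stabilizer_of_le_of_index_eq {H : Subgroup (Perm α)} (hH : H.index = Nat.card α) {x : α}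
    (hx : H ≤ stabilizer (Perm α) x) : H = stabilizer (Perm α) x := by
  have : Nonempty α := ⟨x⟩
  have hmul := Subgroup.relIndex_mul_index hx
  rw [hH, index_stabilizer_of_transitive] at hmul
  exact le_antisymm hx (Subgroup.relIndex_eq_one.1 (Nat.mul_eq_right Nat.card_pos.ne' |>.1 hmul))

lemma exists_eq_stabilizer_of_not_isPretransitive {H : Subgroup (Perm α)}
    (hH : H.index = Nat.card α) (hT : ¬ IsPretransitive H α) :
    ∃ x : α, H = stabilizer (Perm α) x := by
  obtain ⟨x, hx⟩ : ∃ x : α, orbit H x ≠ Set.univ := by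
    by_contra! h
    exact hT ⟨fun a ↦ Set.eq_univ_iff_forall.1 (h a)⟩
  have hle := le_stabilizer_orbit H x
  have hdvd := Subgroup.index_dvd_of_le hle
  rw [hH, index_stabilizer_set] at hdvd
  have hcompl := Set.ncard_add_ncard_compl (orbit H x)
  have hpos := (Set.ncard_pos (Set.toFinite _)).2 (nonempty_orbit (M := H) x)
  have hpos' := (Set.ncard_pos (Set.toFinite _)).2 (Set.nonempty_compl.2 hx)
  obtain h | h := eq_one_or_succ_eq_of_choose_dvd hpos (by lia) hdvd
  · obtain ⟨y, hy⟩ := Set.ncard_eq_one.1 h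
    rw [hy, stabilizer_singleton] at hle
    exact ⟨y, eq_stabilizer_of_le_of_index_eq hH hle⟩
  · obtain ⟨y, hy⟩ := Set.ncard_eq_one.1 (show (orbit H x)ᶜ.ncard = 1 by lia)
    rw [← stabilizer_compl, hy, stabilizer_singleton] at hle
    exact ⟨y, eq_stabilizer_of_le_of_index_eq hH hle⟩

lemma card_mul_index_dvd_factorial {H : Subgroup (Perm α)} [IsPretransitive H α] [Nonempty α] :
    Nat.card α * H.index ∣ (Nat.card α).factorial := by
  obtain ⟨x⟩ := ‹Nonempty α›
  rw [← Nat.card_perm, ← H.card_mul_index, ← index_stabilizer_of_transitive H x]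
  exact Nat.mul_dvd_mul_right (Subgroup.index_dvd_card _) _

end Intransitive

section CosetAction

open MulAction

variable {α : Type*} [Fintype α] [DecidableEq α] {H : Subgroup (Perm α)}

lemma index_le_two_of_alternatingGroup_le (hA : alternatingGroup α ≤ H) : H.index ≤ 2 := by
  obtain hα | hα := subsingleton_or_nontrivial α
  · simp [Subsingleton.elim H ⊤]
  · rw [← alternatingGroup.index_eq_two (α := α)]
    exact Nat.le_of_dvd (by simp) (Subgroup.index_dvd_of_le hA)

lemma toPermHom_quotient_injective (hα : 5 ≤ Nat.card α) (hA : ¬ alternatingGroup α ≤ H) :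
    Function.Injective (toPermHom (Perm α) (Perm α ⧸ H)) := by
  rw [← MonoidHom.ker_eq_bot_iff, ← Subgroup.normalCore_eq_ker]
  by_contra hne
  have := (Subgroup.nontrivial_iff_ne_bot _).2 hne
  exact hA ((Equiv.Perm.alternatingGroup_le_of_normal hα this).trans H.normalCore_le)

lemma alternatingGroup_le_of_index_lt (hα : 5 ≤ Nat.card α) (hH : H.index < Nat.card α) :
    alternatingGroup α ≤ H := by
  by_contra hA
  have hcard := Nat.card_le_card_of_injective _ (toPermHom_quotient_injective hα hA)
  rw [Nat.card_perm, Nat.card_perm, ← Subgroup.index_eq_card] at hcard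
  exact hcard.not_gt ((Nat.factorial_lt (Nat.pos_of_ne_zero Subgroup.index_ne_zero_of_finite)).2 hH)

lemma alternatingGroup_le_of_two_mul_index_le (hα : 4 ≤ Nat.card α)
    (hH : 2 * H.index ≤ Nat.card α) : alternatingGroup α ≤ H := by
  obtain h4 | h5 := hα.eq_or_lt
  · exact Equiv.Perm.alternatingGroup_le_of_index_le_two (by lia)
  · exact alternatingGroup_le_of_index_lt h5 (by lia)

lemma exists_eq_map_stabilizer_of_index_eq {α : Type*} [Finite α] {H : Subgroup (Perm α)}
    (hα : 5 ≤ Nat.card α) (hH : H.index = Nat.card α) :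
    ∃ (φ : Perm α ≃* Perm α) (i : α), H = (stabilizer (Perm α) i).map φ.toMonoidHom := by
  classical
  have := Fintype.ofFinite α
  have hA : ¬ alternatingGroup α ≤ H := fun hA ↦ by
    have := index_le_two_of_alternatingGroup_le hA
    lia
  obtain ⟨e⟩ : Nonempty ((Perm α ⧸ H) ≃ α) := Finite.card_eq.1 hH
  let f : Perm α →* Perm α := e.permCongrHom.toMonoidHom.comp (toPermHom (Perm α) (Perm α ⧸ H))
  have hf : Function.Injective f :=
    e.permCongrHom.injective.comp (toPermHom_quotient_injective hα hA)
  let ψ : Perm α ≃* Perm α := MulEquiv.ofBijective f (Finite.injective_iff_bijective.1 hf)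
  refine ⟨ψ.symm, e (1 : Perm α), ?_⟩
  ext σ
  have hσ : ψ σ (e (1 : Perm α)) = e (σ • (1 : Perm α)) := by simp [ψ, f]
  rw [Subgroup.mem_map_equiv, MulEquiv.symm_symm, mem_stabilizer_iff, Perm.smul_def, hσ,
    e.apply_eq_iff_eq, ← mem_stabilizer_iff, stabilizer_quotient]

end CosetAction

section InvolutionCentralizer

open scoped Nat

lemma two_pow_mul_factorial_lt {j : ℕ} (hj : 3 ≤ j) : 2 ^ j * (j + 1)! < (2 * j)! := by
  induction j, hj using Nat.le_induction with
  | base => decide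
  | succ j hj ih =>
    calc 2 ^ (j + 1) * (j + 2)! = (2 * (j + 2)) * (2 ^ j * (j + 1)!) := by
          rw [Nat.factorial_succ (j + 1)]; ring
      _ < (2 * (j + 2)) * (2 * j)! := Nat.mul_lt_mul_of_pos_left ih (by lia)
      _ ≤ ((2 * j + 2) * (2 * j + 1)) * (2 * j)! := Nat.mul_le_mul_right _ (by nlinarith)
      _ = (2 * j + 2)! := by rw [Nat.factorial_succ, Nat.factorial_succ, mul_assoc]

lemma eq_of_ascFactorial_eq {m j : ℕ} (h : (m + 1).ascFactorial (2 * j) = 2 ^ j * (j + 1)!) :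
    j = 0 ∨ (j = 2 ∧ m = 0) := by
  have hle : (2 * j)! ≤ (m + 1).ascFactorial (2 * j) :=
    (Nat.one_ascFactorial (2 * j)).symm.trans_le (Nat.ascFactorial_le _ (by lia))
  obtain hj | hj := le_or_gt 3 j
  · exact absurd (two_pow_mul_factorial_lt hj) (h ▸ hle).not_gt
  obtain rfl | hm := m.eq_zero_or_pos
  · rw [zero_add, Nat.one_ascFactorial] at h
    interval_cases j <;> simp_all [Nat.factorial]
  · have hle' : (2 : ℕ).ascFactorial (2 * j) ≤ (m + 1).ascFactorial (2 * j) :=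
      Nat.ascFactorial_le _ (by lia)
    interval_cases j <;> simp_all [Nat.ascFactorial, Nat.factorial]

variable {α : Type*} [Fintype α] [DecidableEq α]

lemma card_centralizer_of_cycleType_eq_replicate {σ : Perm α} {k p : ℕ}
    (hσ : σ.cycleType = Multiset.replicate k p) :
    Nat.card (Subgroup.centralizer {σ}) = (Fintype.card α - k * p)! * p ^ k * k ! := by
  rw [Equiv.Perm.nat_card_centralizer, hσ]
  obtain rfl | hk := eq_or_ne k 0
  · simp
  · simp [Multiset.toFinset_replicate, hk, mul_comm]

lemma card_centralizer_map {G G' : Type*} [Group G] [Group G'] (f : G ≃* G') (g : G) :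
    Nat.card (Subgroup.centralizer {f g}) = Nat.card (Subgroup.centralizer {g}) := by
  refine (Nat.card_congr (f.toEquiv.subtypeEquiv fun x ↦ ?_)).symm
  simp [Subgroup.mem_centralizer_singleton_iff, ← map_mul]

lemma isSwap_or_cycleType_eq_replicate_of_card_centralizer_eq {s t : Perm α} (hs : s.IsSwap)
    (ht : orderOf t = 2)
    (hst : Nat.card (Subgroup.centralizer {t}) = Nat.card (Subgroup.centralizer {s})) :
    t.IsSwap ∨ (Nat.card α = 6 ∧ t.cycleType = Multiset.replicate 3 2) := by
  obtain ⟨j, hj⟩ := Equiv.Perm.cycleType_prime_order (ht ▸ Nat.prime_two)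
  rw [ht] at hj
  have hle := t.sum_cycleType_le
  rw [hj, Multiset.sum_replicate, smul_eq_mul] at hle
  obtain ⟨m, hm⟩ := Nat.exists_eq_add_of_le hle
  have hs' : s.cycleType = Multiset.replicate 1 2 := Equiv.Perm.isSwap_iff_cycleType.1 hs
  rw [card_centralizer_of_cycleType_eq_replicate hj,
    card_centralizer_of_cycleType_eq_replicate hs', hm,
    show (j + 1) * 2 + m - 1 * 2 = m + 2 * j by lia, Nat.add_sub_cancel_left,
    ← Nat.factorial_mul_ascFactorial m, pow_succ, pow_one, Nat.factorial_one, mul_one] at hst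
  have hasc : (m + 1).ascFactorial (2 * j) = 2 ^ j * (j + 1)! := by
    apply Nat.eq_of_mul_eq_mul_left (Nat.mul_pos m.factorial_pos two_pos)
    linarith
  obtain rfl | ⟨rfl, rfl⟩ := eq_of_ascFactorial_eq hasc
  · exact Or.inl (Equiv.Perm.isSwap_iff_cycleType.2 hj)
  · exact Or.inr ⟨by rw [Nat.card_eq_fintype_card, hm], hj⟩

end InvolutionCentralizer

section SwapPreserving

open MulAction

variable {α : Type*}

lemma exists_stabilizer_eq_map_conj_stabilizer (G : Type*) [Group G] [MulAction G α]
    [IsPretransitive G α] (x i : α) :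
    ∃ g : G, stabilizer G x = (stabilizer G i).map (MulAut.conj g).toMonoidHom := by
  obtain ⟨g, rfl⟩ := MulAction.exists_smul_eq G i x
  exact ⟨g, stabilizer_smul_eq_stabilizer_map_conj g i⟩

lemma index_map_stabilizer (φ : Perm α ≃* Perm α) (i : α) :
    ((stabilizer (Perm α) i).map φ.toMonoidHom).index = Nat.card α := by
  rw [← index_stabilizer_of_transitive (Perm α) i]
  exact Subgroup.index_map_equiv _ φ

variable [DecidableEq α] {φ : Perm α ≃* Perm α}

lemma stabilizer_eq_closure_isSwap [Finite α] (i : α) :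
    stabilizer (Perm α) i = Subgroup.closure {s : Perm α | s.IsSwap ∧ s i = i} := by
  refine le_antisymm (fun σ hσ ↦ ?_) ((Subgroup.closure_le _).2 fun s hs ↦ hs.2)
  have hσi : σ i = i := hσ
  refine (mem_closure_isSwap fun s hs ↦ hs.1).2 ⟨Set.toFinite _, fun x ↦ ?_⟩
  obtain hx | hx := eq_or_ne (σ x) x
  · rw [hx]
    exact mem_orbit_self x
  · have hxi : x ≠ i := by
      rintro rfl
      exact hx hσi
    have hσxi : σ x ≠ i := fun h ↦ hxi (σ.injective (h.trans hσi.symm))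
    exact ⟨⟨swap x (σ x), Subgroup.subset_closure
      ⟨⟨x, σ x, hx.symm, rfl⟩, swap_apply_of_ne_of_ne hxi.symm hσxi.symm⟩⟩, swap_apply_left _ _⟩

lemma exists_map_stabilizer_eq_of_isSwap [Finite α] [Nontrivial α]
    (hφ : ∀ s : Perm α, s.IsSwap → (φ s).IsSwap) (i : α) :
    ∃ x : α, (stabilizer (Perm α) i).map φ.toMonoidHom = stabilizer (Perm α) x := by
  have hH := index_map_stabilizer φ i
  refine exists_eq_stabilizer_of_not_isPretransitive hH fun hT ↦ ?_
  rw [stabilizer_eq_closure_isSwap, MonoidHom.map_closure] at hT hH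
  rw [closure_of_isSwap_of_isPretransitive, Subgroup.index_top] at hH
  · exact Finite.one_lt_card.ne hH
  · rintro _ ⟨s, ⟨hs, -⟩, rfl⟩
    exact hφ s hs

lemma isSwap_map_of_isSwap [Finite α] {s t : Perm α} (hs : s.IsSwap) (hφs : (φ s).IsSwap)
    (ht : t.IsSwap) : (φ t).IsSwap := by
  have := Fintype.ofFinite α
  have hst : IsConj s t := Equiv.Perm.isConj_iff_cycleType_eq.2 <| by
    rw [Equiv.Perm.isSwap_iff_cycleType.1 hs, Equiv.Perm.isSwap_iff_cycleType.1 ht]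
  rw [Equiv.Perm.isSwap_iff_cycleType, ← Equiv.Perm.isSwap_iff_cycleType.1 hφs]
  exact (Equiv.Perm.isConj_iff_cycleType_eq.1 (φ.toMonoidHom.map_isConj hst)).symm

lemma card_eq_six_of_map_stabilizer_ne [Fintype α] [Nontrivial α] {i : α}
    (hφ : ∀ x : α, (stabilizer (Perm α) i).map φ.toMonoidHom ≠ stabilizer (Perm α) x) :
    Nat.card α = 6 ∧
      ∀ s : Perm α, s.IsSwap → (φ s).cycleType = Multiset.replicate 3 2 := by
  have hnot (s : Perm α) (hs : s.IsSwap) : ¬ (φ s).IsSwap := fun hφs ↦ by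
    obtain ⟨x, hx⟩ := exists_map_stabilizer_eq_of_isSwap
      (fun t ht ↦ isSwap_map_of_isSwap hs hφs ht) i
    exact hφ x hx
  have key (s : Perm α) (hs : s.IsSwap) :
      Nat.card α = 6 ∧ (φ s).cycleType = Multiset.replicate 3 2 :=
    (isSwap_or_cycleType_eq_replicate_of_card_centralizer_eq hs
      ((MulEquiv.orderOf_eq φ s).trans hs.orderOf) (card_centralizer_map φ s)).resolve_left
      (hnot s hs)
  obtain ⟨a, b, hab⟩ := exists_pair_ne α
  exact ⟨(key (swap a b) ⟨a, b, hab, rfl⟩).1, fun s hs ↦ (key s hs).2⟩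

end SwapPreserving

section ProjectiveLinear

open MulAction Projectivization
open scoped LinearAlgebra.Projectivization

variable {ι K : Type*} [Fintype ι] [DecidableEq ι] [Field K]

lemma ker_toPermHom_projectivization :
    (toPermHom (GL ι K) (ℙ K (ι → K))).ker = Subgroup.center (GL ι K) := by
  ext g
  rw [Matrix.GeneralLinearGroup.mem_center_iff_val_mem_range_scalar, MonoidHom.mem_ker,
    Equiv.ext_iff]
  constructor
  · intro hg
    obtain ⟨a, ha⟩ := (Matrix.toLin' g.1).exists_eq_smul_id_of_forall_notLinearIndependent
      fun v ↦ by
        by_cases hv : v = 0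
        · simp [hv, linearIndependent_fin2]
        · simpa [LinearIndependent.pair_iff' hv, mk_eq_mk_iff'] using! hg (.mk K v hv)
    exact ⟨a, Matrix.toLin'.injective (by rw [ha]; ext; simp [Pi.single_apply])⟩
  · rintro ⟨a, ha⟩ x
    induction x using Projectivization.ind with | h v hv =>
    refine (mk_eq_mk_iff' K _ _ _ _).2 ⟨a, ?_⟩
    change a • v = g.1.mulVec v
    simp [← ha]

lemma card_center_GL [Nonempty ι] : Nat.card (Subgroup.center (GL ι K)) = Nat.card Kˣ := by
  rw [Matrix.GeneralLinearGroup.center_eq_range_scalar]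
  refine (Nat.card_congr (MonoidHom.ofInjective fun a b hab ↦ Units.ext ?_).toEquiv).symm
  exact Matrix.scalar_inj.1 (congrArg Units.val hab)

instance : IsPretransitive (GL ι K) (ℙ K (ι → K)) where
  exists_smul_eq x y := by
    obtain ⟨g, hg⟩ := exists_smul_eq (Matrix.SpecialLinearGroup ι K) x y
    exact ⟨g, hg⟩

end ProjectiveLinear

section PGL

lemma card_projLine5 : Nat.card ProjLine5 = 6 := by
  simp [Projectivization.card_of_finrank_two (ZMod 5) (Fin 2 → ZMod 5)]

lemma glPermHom_eq_toPermHom :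
    glPermHom = MulAction.toPermHom (GL (Fin 2) (ZMod 5)) ProjLine5 :=
  rfl

lemma card_range_glPermHom : Nat.card glPermHom.range = 120 := by
  have hker : Nat.card glPermHom.ker = 4 := by
    rw [glPermHom_eq_toPermHom, ker_toPermHom_projectivization, card_center_GL,
      Nat.card_eq_fintype_card, ZMod.card_units]
  have hGL : Nat.card (GL (Fin 2) (ZMod 5)) = 480 := by
    rw [Matrix.card_GL_field]
    simp [Fin.prod_univ_two]
  have hmul := glPermHom.ker.card_mul_index
  rw [Subgroup.index_ker, hker, hGL] at hmul
  lia

lemma permCongrHom_injective {α β : Type*} (f : α ≃ β) :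
    Function.Injective (_root_.permCongrHom f) :=
  f.permCongr.injective

lemma index_pglSubgroup {n : ℕ} (f : Fin n ≃ ProjLine5) : (pglSubgroup f).index = 6 := by
  have hcard : Nat.card (pglSubgroup f) = 120 := by
    rw [pglSubgroup, Subgroup.card_map_of_injective (permCongrHom_injective _),
      card_range_glPermHom]
  have hperm : Nat.card (Perm (Fin n)) = 720 := by
    rw [Nat.card_congr f.permCongr, Nat.card_perm, card_projLine5]
    rfl
  have hmul := (pglSubgroup f).card_mul_index
  rw [hcard, hperm] at hmul
  lia

lemma pglSubgroup_ne_stabilizer {n : ℕ} (f : Fin n ≃ ProjLine5) (x : Fin n) :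
    pglSubgroup f ≠ MulAction.stabilizer (Perm (Fin n)) x := by
  intro h
  have hfix (g : GL (Fin 2) (ZMod 5)) : g • f x = f x := by
    have hg : _root_.permCongrHom f.symm (glPermHom g) ∈ MulAction.stabilizer (Perm (Fin n)) x :=
      h ▸ Subgroup.mem_map_of_mem _ ⟨g, rfl⟩
    exact f.symm_apply_eq.1 hg
  have : Subsingleton ProjLine5 := subsingleton_of_forall_eq (f x) fun y ↦ by
    obtain ⟨g, rfl⟩ := MulAction.exists_smul_eq (GL (Fin 2) (ZMod 5)) (f x) y
    exact hfix g
  have := card_projLine5 ▸ Finite.card_le_one_iff_subsingleton.2 this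
  lia

lemma map_conj_pglSubgroup {n : ℕ} (f : Fin n ≃ ProjLine5) (τ : Perm (Fin n)) :
    (pglSubgroup f).map (MulAut.conj τ).toMonoidHom = pglSubgroup (τ.symm.trans f) := by
  rw [pglSubgroup, Subgroup.map_map]
  rfl

end PGL

section IndexN

open MulAction

variable {α : Type*} [Finite α] {H K : Subgroup (Perm α)}

lemma exists_map_stabilizer_eq_map_conj [Nontrivial α] {φ ψ : Perm α ≃* Perm α} {i j : α}
    (hφ : ∀ x : α, (stabilizer (Perm α) i).map φ.toMonoidHom ≠ stabilizer (Perm α) x)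
    (hψ : ∀ x : α, (stabilizer (Perm α) j).map ψ.toMonoidHom ≠ stabilizer (Perm α) x) :
    ∃ τ : Perm α, (stabilizer (Perm α) j).map ψ.toMonoidHom =
      ((stabilizer (Perm α) i).map φ.toMonoidHom).map (MulAut.conj τ).toMonoidHom := by
  classical
  have := Fintype.ofFinite α
  have hswap (s : Perm α) (hs : s.IsSwap) : ((ψ.trans φ.symm) s).IsSwap := by
    obtain ⟨τ, hτ⟩ := isConj_iff.1 <| Equiv.Perm.isConj_iff_cycleType_eq.2 <|
      ((card_eq_six_of_map_stabilizer_ne hφ).2 s hs).trans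
        ((card_eq_six_of_map_stabilizer_ne hψ).2 s hs).symm
    have hconj : IsConj s (φ.symm (ψ s)) := isConj_iff.2 ⟨φ.symm τ, by
      rw [← hτ]
      simp⟩
    rw [MulEquiv.trans_apply, Equiv.Perm.isSwap_iff_cycleType,
      ← Equiv.Perm.isConj_iff_cycleType_eq.1 hconj, ← Equiv.Perm.isSwap_iff_cycleType]
    exact hs
  obtain ⟨x, hx⟩ := exists_map_stabilizer_eq_of_isSwap hswap j
  obtain ⟨τ, hτ⟩ := exists_stabilizer_eq_map_conj_stabilizer (Perm α) x i
  refine ⟨φ τ, ?_⟩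
  calc (stabilizer (Perm α) j).map ψ.toMonoidHom
      = ((stabilizer (Perm α) j).map (ψ.trans φ.symm).toMonoidHom).map φ.toMonoidHom := by
        rw [Subgroup.map_map]
        congr 1
        ext1 σ
        simp
    _ = ((stabilizer (Perm α) i).map (MulAut.conj τ).toMonoidHom).map φ.toMonoidHom := by
        rw [hx, hτ]
    _ = ((stabilizer (Perm α) i).map φ.toMonoidHom).map (MulAut.conj (φ τ)).toMonoidHom := by
        rw [Subgroup.map_map, Subgroup.map_map]
        congr 1
        ext1 σ
        simp

lemma card_eq_six_of_index_eq (hα : 4 ≤ Nat.card α) (hH : H.index = Nat.card α)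
    (hH' : ∀ x : α, H ≠ stabilizer (Perm α) x) : Nat.card α = 6 := by
  have : Nontrivial α := Finite.one_lt_card_iff_nontrivial.1 (by lia)
  obtain h4 | h5 := hα.eq_or_lt
  · by_cases hT : IsPretransitive H α
    · have hdvd := card_mul_index_dvd_factorial (H := H)
      rw [hH, ← h4] at hdvd
      exact absurd hdvd (by decide)
    · obtain ⟨x, hx⟩ := exists_eq_stabilizer_of_not_isPretransitive hH hT
      exact (hH' x hx).elim
  · classical
    have := Fintype.ofFinite α
    obtain ⟨φ, i, rfl⟩ := exists_eq_map_stabilizer_of_index_eq h5 hH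
    exact (card_eq_six_of_map_stabilizer_ne hH').1

lemma exists_eq_map_conj_of_index_eq (hα : 5 ≤ Nat.card α)
    (hH : H.index = Nat.card α) (hH' : ∀ x : α, H ≠ stabilizer (Perm α) x)
    (hK : K.index = Nat.card α) (hK' : ∀ x : α, K ≠ stabilizer (Perm α) x) :
    ∃ τ : Perm α, K = H.map (MulAut.conj τ).toMonoidHom := by
  have : Nontrivial α := Finite.one_lt_card_iff_nontrivial.1 (by lia)
  obtain ⟨φ, i, rfl⟩ := exists_eq_map_stabilizer_of_index_eq hα hH
  obtain ⟨ψ, j, rfl⟩ := exists_eq_map_stabilizer_of_index_eq hα hK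
  exact exists_map_stabilizer_eq_map_conj hH' hK'

lemma eq_stabilizer_or_eq_pglSubgroup_of_index_eq {n : ℕ} (hn : 4 ≤ n)
    {P : Subgroup (Perm (Fin n))} (hP : P.index = n) :
    (∃ x : Fin n, P = stabilizer (Perm (Fin n)) x) ∨
      (n = 6 ∧ ∃ f : Fin n ≃ ProjLine5, P = pglSubgroup f) := by
  refine or_iff_not_imp_left.2 fun hP' ↦ ?_
  rw [not_exists] at hP'
  obtain rfl : n = 6 := by
    simpa using card_eq_six_of_index_eq (by simpa using hn) (by simpa using hP) hP'
  let f : Fin 6 ≃ ProjLine5 := (Finite.equivFinOfCardEq card_projLine5).symm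
  obtain ⟨τ, hτ⟩ := exists_eq_map_conj_of_index_eq (by simp)
    (by simpa using index_pglSubgroup f) (pglSubgroup_ne_stabilizer f) (by simpa using hP) hP'
  exact ⟨rfl, τ.symm.trans f, hτ.trans (map_conj_pglSubgroup f τ)⟩

end IndexN

section SemidirectProduct

lemma relIndex_mul_index_sup {G : Type*} [Group G] (K M : Subgroup G) [M.Normal]
    [M.IsFiniteRelIndex K] : K.relIndex M * (K ⊔ M).index = K.index := by
  have hM : M.relIndex K * (K ⊔ M).index = M.index := by
    rw [← Subgroup.relIndex_sup_right, Subgroup.relIndex_mul_index le_sup_right]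
  have hinf : K.relIndex M * M.index = M.relIndex K * K.index := by
    rw [← Subgroup.inf_relIndex_right K M, Subgroup.relIndex_mul_index inf_le_right,
      ← Subgroup.inf_relIndex_left K M, Subgroup.relIndex_mul_index inf_le_left]
  apply Nat.eq_of_mul_eq_mul_left
    (Nat.pos_of_ne_zero (Subgroup.relIndex_ne_zero (H := M) (K := K)))
  rw [← hinf, ← hM]
  ring

lemma eq_of_le_of_prime_index {G : Type*} [Group G] {H K : Subgroup G} (hH : H.index.Prime)
    (hle : H ≤ K) (hK : K ≠ ⊤) : K = H := by
  obtain h | h := hH.eq_one_or_self_of_dvd _ (Subgroup.index_dvd_of_le hle)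
  · exact (hK (Subgroup.index_eq_one.1 h)).elim
  · have hmul := Subgroup.relIndex_mul_index hle
    rw [h, Nat.mul_eq_right hH.ne_zero, Subgroup.relIndex_eq_one] at hmul
    exact hmul.antisymm hle

variable {N G : Type*} [Group N] [Group G] {φ : G →* MulAut N} {K : Subgroup (N ⋊[φ] G)}

lemma index_map_rightHom_mul_index_comap_inl [Finite G] (K : Subgroup (N ⋊[φ] G)) :
    (K.map rightHom).index * (K.comap inl).index = K.index := by
  have := Subgroup.isFiniteRelIndex_of_finiteIndex (H := (rightHom : N ⋊[φ] G →* G).ker) (K := K)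
  rw [Subgroup.index_map, MonoidHom.range_eq_top.2 rightHom_surjective, Subgroup.index_top,
    mul_one, Subgroup.index_comap, range_inl_eq_ker_rightHom, mul_comm, relIndex_mul_index_sup]

lemma eq_map_inl_sup_map_inr (h : ∀ k ∈ K, (inl k.left : N ⋊[φ] G) ∈ K) :
    K = (K.comap inl).map inl ⊔ (K.map rightHom).map inr := by
  refine le_antisymm (fun k hk ↦ ?_)
    (sup_le (Subgroup.map_comap_le _ _) (Subgroup.map_le_iff_le_comap.2 ?_))
  · rw [← inl_left_mul_inr_right k]
    exact Subgroup.mul_mem_sup (Subgroup.mem_map_of_mem _ (h k hk))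
      (Subgroup.mem_map_of_mem _ (Subgroup.mem_map_of_mem rightHom hk))
  · rintro _ ⟨k, hk, rfl⟩
    have hk' : inl k.left * inr k.right ∈ K := by rwa [inl_left_mul_inr_right]
    exact (mul_mem_cancel_left (h k hk)).1 hk'

lemma apply_mem_comap_inl {N : Type*} [CommGroup N] {φ : G →* MulAut N} {K : Subgroup (N ⋊[φ] G)}
    {g : G} (hg : g ∈ K.map rightHom) {n : N} (hn : n ∈ K.comap inl) : φ g n ∈ K.comap inl := by
  obtain ⟨k, hk, rfl⟩ := hg
  have hconj : inl (φ k.right n) = k * inl n * k⁻¹ := by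
    rw [eq_mul_inv_iff_mul_eq]
    ext <;> simp [mul_comm]
  rw [Subgroup.mem_comap, rightHom_eq_right, hconj]
  exact mul_mem (mul_mem hk hn) (inv_mem hk)

end SemidirectProduct

section SignVectors

variable {n : ℕ}

lemma permAction_apply (σ : Perm (Fin n)) (v : Fin n → ℤˣ) (i : Fin n) :
    permAction n σ v i = v (σ⁻¹ i) :=
  rfl

lemma permAction_mulSingle (σ : Perm (Fin n)) (i : Fin n) (u : ℤˣ) :
    permAction n σ (Pi.mulSingle i u) = Pi.mulSingle (σ i) u := by
  ext1 j
  rw [permAction_apply, Pi.mulSingle_apply, Pi.mulSingle_apply]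
  exact if_congr Equiv.Perm.inv_eq_iff_eq rfl rfl

lemma prodHom_apply (v : Fin n → ℤˣ) : prodHom n v = ∏ i, v i := by
  simp [prodHom]

lemma prodHom_permAction (σ : Perm (Fin n)) (v : Fin n → ℤˣ) :
    prodHom n (permAction n σ v) = prodHom n v := by
  rw [prodHom_apply, prodHom_apply]
  exact Equiv.prod_comp σ⁻¹ v

lemma mul_permAction_eq_mulSingle_mul {v : Fin n → ℤˣ} {i j k : Fin n} (hij : v i ≠ v j)
    (hkj : v k = v j) (hne : k ≠ j) :
    v * permAction n (swap i j * swap j k) v = Pi.mulSingle i (-1) * Pi.mulSingle j (-1) := by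
  have hij' : i ≠ j := ne_of_apply_ne v hij
  have hik : i ≠ k := ne_of_apply_ne v (hkj ▸ hij)
  have hneg : v i * v j = -1 := by rw [Int.units_ne_iff_eq_neg.1 hij, neg_mul, Int.units_mul_self]
  ext1 x
  rw [Pi.mul_apply, Pi.mul_apply, permAction_apply, mul_inv_rev, swap_inv, swap_inv,
    Equiv.Perm.mul_apply]
  by_cases hxi : x = i
  · subst hxi
    simp [hkj, hneg, hij']
  by_cases hxj : x = j
  · subst hxj
    rw [swap_apply_right, swap_apply_of_ne_of_ne hij' hik, mul_comm, hneg]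
    simp [hij']
  by_cases hxk : x = k
  · subst hxk
    rw [swap_apply_of_ne_of_ne hxi hxj]
    simp [hkj, hxi, hxj]
  · rw [swap_apply_of_ne_of_ne hxi hxj, swap_apply_of_ne_of_ne hxj hxk]
    simp [hxi, hxj]

lemma exists_mem_alternatingGroup_apply_eq (hn : 4 ≤ n) {a b c d : Fin n} (hab : a ≠ b)
    (hcd : c ≠ d) : ∃ σ ∈ alternatingGroup (Fin n), σ a = c ∧ σ b = d := by
  have := alternatingGroup.isMultiplyPretransitive (Fin n)
  have : MulAction.IsMultiplyPretransitive (alternatingGroup (Fin n)) (Fin n) 2 :=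
    MulAction.isMultiplyPretransitive_of_le (n := Nat.card (Fin n) - 2)
      (by simpa using by lia) (by simp)
  obtain ⟨σ, hσ⟩ := MulAction.is_two_pretransitive_iff.1 this hab hcd
  exact ⟨σ, σ.2, hσ⟩

variable {W : Subgroup (Fin n → ℤˣ)}

lemma exists_ne_of_two_mul_index_lt (hW : 2 * W.index < 2 ^ n) :
    ∃ v ∈ W, ∃ i j, v i ≠ v j := by
  by_contra! hconst
  have hle : Nat.card W ≤ 2 := by
    obtain hn | ⟨⟨a⟩⟩ := isEmpty_or_nonempty (Fin n)
    · simp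
    · rw [← Fintype.card_units_int, ← Nat.card_eq_fintype_card]
      refine Nat.card_le_card_of_injective (fun w : W ↦ w.1 a) fun w w' h ↦ ?_
      ext1
      funext i
      rw [hconst w w.2 i a, hconst w' w'.2 i a]
      exact h
  have hcard := W.card_mul_index
  rw [Nat.card_fun, Nat.card_eq_fintype_card (α := ℤˣ), Fintype.card_units_int,
    Nat.card_fin] at hcard
  exact hW.not_ge (hcard ▸ Nat.mul_le_mul_right _ hle)

lemma evenSign_le_of_mulSingle_mul_mem
    (hW : ∀ i j, i ≠ j → Pi.mulSingle i (-1) * Pi.mulSingle j (-1) ∈ W) : evenSign n ≤ W := by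
  have hpair (i j : Fin n) (u : ℤˣ) : Pi.mulSingle i u * Pi.mulSingle j u ∈ W := by
    obtain rfl | hij := eq_or_ne i j
    · simp [← Pi.mulSingle_mul]
    · obtain rfl | rfl := Int.units_eq_one_or u
      · simp
      · exact hW i j hij
  intro v hv
  obtain hn | ⟨⟨a⟩⟩ := isEmpty_or_nonempty (Fin n)
  · simp [Subsingleton.elim v 1]
  have hva : v * Pi.mulSingle a (prodHom n v) =
      ∏ i, Pi.mulSingle i (v i) * Pi.mulSingle a (v i) := by
    rw [Finset.prod_mul_distrib, Finset.univ_prod_mulSingle, prodHom_apply]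
    congr 1
    exact map_prod (MonoidHom.mulSingle (fun _ : Fin n => ℤˣ) a) v Finset.univ
  rw [MonoidHom.mem_ker.1 hv, Pi.mulSingle_one, mul_one] at hva
  rw [hva]
  exact prod_mem fun i _ ↦ hpair i a (v i)

lemma evenSign_le_of_permAction_mem (hn : 4 ≤ n)
    (hinv : ∀ σ ∈ alternatingGroup (Fin n), ∀ v ∈ W, permAction n σ v ∈ W)
    (hW : 2 * W.index < 2 ^ n) : evenSign n ≤ W := by
  obtain ⟨v, hv, i, j, hij⟩ := exists_ne_of_two_mul_index_lt hW
  obtain ⟨k, hki, hkj⟩ := Fin.exists_ne_and_ne_of_two_lt i j (by lia)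
  wlog hk : v k = v j generalizing i j
  · refine this j i hij.symm hkj hki ?_
    rw [Int.units_ne_iff_eq_neg.1 hk, Int.units_ne_iff_eq_neg.1 hij]
  have hpair : Pi.mulSingle i (-1) * Pi.mulSingle j (-1) ∈ W := by
    rw [← mul_permAction_eq_mulSingle_mul hij hk hkj]
    refine mul_mem hv (hinv _ ?_ v hv)
    rw [Equiv.Perm.mem_alternatingGroup, Equiv.Perm.sign_mul,
      Equiv.Perm.sign_swap (ne_of_apply_ne v hij), Equiv.Perm.sign_swap hkj.symm,
      Int.units_mul_self]
  refine evenSign_le_of_mulSingle_mul_mem fun a b hab ↦ ?_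
  obtain ⟨σ, hσ, rfl, rfl⟩ :=
    exists_mem_alternatingGroup_apply_eq hn (ne_of_apply_ne v hij) hab
  rw [← permAction_mulSingle, ← permAction_mulSingle, ← map_mul]
  exact hinv σ hσ _ hpair

lemma index_evenSign [NeZero n] : (evenSign n).index = 2 := by
  have hsurj : Function.Surjective (prodHom n) := fun u ↦
    ⟨Pi.mulSingle 0 u, by simp [prodHom_apply]⟩
  rw [evenSign, Subgroup.index_ker, MonoidHom.range_eq_top.2 hsurj, Subgroup.card_top,
    Nat.card_eq_fintype_card, Fintype.card_units_int]

end SignVectors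

section SignProduct

variable {n : ℕ} {K : Subgroup (HyperOct n)}

/-- The product-of-signs character `(v, σ) ↦ ∏ v i` of `Bₙ`. On `C₂ⁿ` it is `prodHom n`, so a
subgroup in its kernel has all of its sign vectors even. -/
def signProd (n : ℕ) : HyperOct n →* ℤˣ :=
  lift (prodHom n) 1 fun σ ↦ by
    refine MonoidHom.ext fun v ↦ ?_
    simp [prodHom_permAction]

lemma signProd_apply (k : HyperOct n) : signProd n k = prodHom n k.left :=
  mul_one _

lemma signProd_eq_one_of_rightHom_eq_one (hW : K.comap inl ≤ evenSign n) {k : HyperOct n}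
    (hk : k ∈ K) (hr : rightHom k = 1) : signProd n k = 1 := by
  have hleft : inl k.left = k := by ext <;> simp_all
  rw [signProd_apply]
  exact hW (Subgroup.mem_comap.2 (hleft.symm ▸ hk))

lemma signProd_eq_one_of_isThreeCycle (hW : K.comap inl ≤ evenSign n) {k : HyperOct n}
    (hk : k ∈ K) (hr : (rightHom k).IsThreeCycle) : signProd n k = 1 := by
  have hcube : signProd n (k ^ 3) = 1 := by
    refine signProd_eq_one_of_rightHom_eq_one hW (pow_mem hk 3) ?_
    rw [map_pow, ← hr.orderOf, pow_orderOf_eq_one]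
  rwa [map_pow, pow_succ, Int.units_sq, one_mul] at hcube

lemma le_ker_signProd (hW : K.comap inl ≤ evenSign n)
    (hP : K.map rightHom = alternatingGroup (Fin n)) : K ≤ (signProd n).ker := by
  have hlift : K.map rightHom ≤ (K ⊓ (signProd n).ker).map rightHom := by
    nth_rw 1 [hP]
    rw [← Equiv.Perm.closure_three_cycles_eq_alternating, Subgroup.closure_le]
    intro σ hσ
    obtain ⟨k, hk, rfl⟩ := hP.ge hσ.mem_alternatingGroup
    exact Subgroup.mem_map_of_mem _ ⟨hk, signProd_eq_one_of_isThreeCycle hW hk hσ⟩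
  intro k hk
  obtain ⟨l, ⟨hlK, hl⟩, hlk⟩ := hlift (Subgroup.mem_map_of_mem _ hk)
  have hdiv : signProd n (k / l) = 1 :=
    signProd_eq_one_of_rightHom_eq_one hW (div_mem hk hlK) (by rw [map_div, hlk, div_self'])
  rwa [map_div, MonoidHom.mem_ker.1 hl, div_one] at hdiv

lemma eq_mix_alternatingGroup (hW : K.comap inl = evenSign n)
    (hP : K.map rightHom = alternatingGroup (Fin n)) :
    K = mix (evenSign n) (alternatingGroup (Fin n)) := by
  rw [mix, ← hW, ← hP]
  refine eq_map_inl_sup_map_inr fun k hk ↦ ?_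
  exact hW.ge ((signProd_apply k).symm.trans (le_ker_signProd hW.le hP hk))

lemma eq_mix_top (hW : K.comap inl = ⊤) : K = mix ⊤ (K.map rightHom) := by
  rw [mix, ← hW]
  exact eq_map_inl_sup_map_inr fun k _ ↦ hW.ge (Subgroup.mem_top k.left)

end SignProduct

lemma two_mul_lt_two_pow {n : ℕ} (hn : 3 ≤ n) : 2 * n < 2 ^ n := by
  induction n, hn using Nat.le_induction with
  | base => norm_num
  | succ n hn ih =>
    rw [pow_succ]
    lia

lemma eq_four_of_comap_inl_ne_top {n : ℕ} (hn : 4 ≤ n) {K : Subgroup (HyperOct n)}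
    (hK : K.index = n) (hW : K.comap inl ≠ ⊤) :
    n = 4 ∧ K.comap inl = evenSign n ∧ K.map rightHom = alternatingGroup (Fin n) := by
  have : NeZero n := ⟨by lia⟩
  have hmul := index_map_rightHom_mul_index_comap_inl K
  rw [hK] at hmul
  have hA : alternatingGroup (Fin n) ≤ K.map rightHom := by
    have hW₁ : (K.comap inl).index ≠ 1 := mt Subgroup.index_eq_one.1 hW
    have hW₀ : (K.comap inl).index ≠ 0 := Subgroup.index_ne_zero_of_finite
    refine alternatingGroup_le_of_two_mul_index_le (by simpa using hn) ?_
    rw [Nat.card_fin, mul_comm]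
    exact (Nat.mul_le_mul_left _ (by lia)).trans hmul.le
  have hle : evenSign n ≤ K.comap inl := by
    refine evenSign_le_of_permAction_mem hn (fun σ hσ v hv ↦ apply_mem_comap_inl (hA hσ) hv) ?_
    have hWn : (K.comap inl).index ≤ n := Nat.le_of_dvd (by lia) (Dvd.intro_left _ hmul)
    exact (Nat.mul_le_mul_left 2 hWn).trans_lt (two_mul_lt_two_pow (by lia))
  have hprime : (evenSign n).index.Prime := by
    rw [index_evenSign]
    exact Nat.prime_two
  have hWeven : K.comap inl = evenSign n := eq_of_le_of_prime_index hprime hle hW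
  rw [hWeven, index_evenSign] at hmul
  have hP := index_le_two_of_alternatingGroup_le hA
  exact ⟨by lia, hWeven, Equiv.Perm.eq_alternatingGroup_of_index_eq_two (by lia)⟩

/-- For `n ≥ 4`, a subgroup of the hyperoctahedral group `Bₙ` of index `n` is, up to
conjugacy, `C₂ⁿ ⋊ Sₙ₋₁` (stabilizer of the last coordinate axis in the permutation part),
or `n = 4` and it is `C₂⁴⁺ ⋊ A₄`, or `n = 6` and it is `C₂⁶ ⋊ PGL₂(5)`. -/
theorem subgroup_of_index_n_in_hyperoctahedral (n : ℕ) (hn : 4 ≤ n)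
    (K : Subgroup (HyperOct n)) (hK : K.index = n) :
    (∃ x : Fin n, K = mix ⊤ (MulAction.stabilizer (Equiv.Perm (Fin n)) x)) ∨
      (n = 4 ∧ K = mix (evenSign n) (alternatingGroup (Fin n))) ∨
      (n = 6 ∧ ∃ f : Fin n ≃ ProjLine5, K = mix ⊤ (pglSubgroup f)) := by
  by_cases hW : K.comap inl = ⊤
  · have hP : (K.map rightHom).index = n := by
      simpa [hW, hK] using index_map_rightHom_mul_index_comap_inl K
    have hKmix := eq_mix_top hW
    obtain ⟨x, hx⟩ | ⟨hn6, f, hf⟩ := eq_stabilizer_or_eq_pglSubgroup_of_index_eq hn hP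
    · exact Or.inl ⟨x, hx ▸ hKmix⟩
    · exact Or.inr (Or.inr ⟨hn6, f, hf ▸ hKmix⟩)
  · obtain ⟨hn4, hW', hP⟩ := eq_four_of_comap_inl_ne_top hn hK hW
    exact Or.inr (Or.inl ⟨hn4, eq_mix_alternatingGroup hW' hP⟩)
end

section
/- If Λ ⊆ ℤ⁴ is a rank-4 lattice invariant under the group C₂⁴ ⋊ D₄ (all sign changes combined with the dihedral group D₄ ≤ S₄ permuting coordinates as symmetries of a square on labels 1,2,3,4), then Λ is an integer multiple of one of: ℤ⁴, D₄-lattice {x ∈ ℤ⁴ : Σxᵢ even}, the lattice of integer vectors with all coordinates of the same parity, or the lattice generated by (1,0,1,0), (1,0,−1,0), (0,1,0,1), (0,1,0,−1). -/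
/-!
Suppose that `G ≤ Sₙ` is transitive and `Λ` is invariant under `C₂ⁿ ⋊ G`. All coordinate
projections of `Λ` are the same ideal `dℤ`, so `Λ = d • M` with `M` invariant and containing a
vector with a coordinate equal to `1`. Subtracting from it its image under a single sign change
shows `2ℤⁿ ⊆ M`, so `M` is the preimage of a nonzero `G`-invariant binary code. The nonzero
`D₄`-invariant codes of length `4` form the chain `⟨1111⟩ < ⟨1010, 0101⟩ < even weight < 𝔽₂⁴`.
-/

open Equiv

/-- The signed permutation of `ℤⁿ` determined by a sign vector `v` and a permutation `σ`:
`x ↦ (i ↦ v i * x (σ⁻¹ i))`. -/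
def signedPerm {n : ℕ} (v : Fin n → ℤˣ) (σ : Perm (Fin n)) (x : Fin n → ℤ) : Fin n → ℤ :=
  fun i => (v i : ℤ) * x (σ.symm i)

/-- `Λ` is a rank-`n` lattice in `ℤⁿ`: it is spanned by `n` linearly independent
vectors. -/
def IsFullLattice {n : ℕ} (Λ : Submodule ℤ (Fin n → ℤ)) : Prop :=
  ∃ b : Fin n → (Fin n → ℤ), LinearIndependent ℤ b ∧ Λ = Submodule.span ℤ (Set.range b)

/-- The scaling of a lattice by an integer `s`. -/
def scl {n : ℕ} (s : ℤ) (p : Submodule ℤ (Fin n → ℤ)) : Submodule ℤ (Fin n → ℤ) :=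
  p.map (s • (LinearMap.id : (Fin n → ℤ) →ₗ[ℤ] (Fin n → ℤ)))

/-- The lattice `Dₙ` of integer vectors with even coordinate sum. -/
def Dlat (n : ℕ) : Submodule ℤ (Fin n → ℤ) where
  carrier := {x | (2 : ℤ) ∣ ∑ i, x i}
  add_mem' := by
    intro a b ha hb
    simpa [Finset.sum_add_distrib] using dvd_add ha hb
  zero_mem' := by simp
  smul_mem' := by
    intro c x hx
    simpa [Finset.mul_sum] using hx.mul_left c

/-- The lattice of integer vectors all of whose coordinates have the same parity. -/
def sameParity (n : ℕ) : Submodule ℤ (Fin n → ℤ) where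
  carrier := {x | ∀ i j, (2 : ℤ) ∣ (x i - x j)}
  add_mem' := by
    intro a b ha hb i j
    have := dvd_add (ha i j) (hb i j)
    simpa [Pi.add_apply, add_sub_add_comm] using this
  zero_mem' := by simp
  smul_mem' := by
    intro c x hx i j
    have := (hx i j).mul_left c
    simpa [Pi.smul_apply, smul_eq_mul, mul_sub] using this

/-- The basis of the lattice `Λ₀`: `v₁ = (1,…,1)` and, for `2 ≤ k ≤ n`, `v_k` having `-1`
in positions `1` and `k` and `1` elsewhere (`0`-indexed: positions `0` and `k`). -/
def L0basis (n : ℕ) : Fin n → (Fin n → ℤ) :=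
  fun k i => if k.val = 0 then 1 else if i.val = 0 ∨ i = k then -1 else 1

/-- The lattice `Λ₀`. -/
def L0 (n : ℕ) : Submodule ℤ (Fin n → ℤ) := Submodule.span ℤ (Set.range (L0basis n))

/-- The basis of the lattice `Λ₁`: `w_k` has `-1` in position `k` and `1` elsewhere. -/
def L1basis (n : ℕ) : Fin n → (Fin n → ℤ) :=
  fun k i => if i = k then -1 else 1

/-- The lattice `Λ₁`. -/
def L1 (n : ℕ) : Submodule ℤ (Fin n → ℤ) := Submodule.span ℤ (Set.range (L1basis n))

/-- The dihedral subgroup `D₄ ≤ S₄` of order 8 permuting the coordinates as the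
symmetries of a square on the labels `1,2,3,4`. -/
def dihedralD4 : Subgroup (Perm (Fin 4)) :=
  Subgroup.closure {Equiv.swap (0 : Fin 4) 1 * Equiv.swap (2 : Fin 4) 3,
    Equiv.swap (1 : Fin 4) 3}

/-- The lattice `Λ_{(1,1)} × Λ_{(1,1)}` generated by `(1,0,1,0)`, `(1,0,−1,0)`,
`(0,1,0,1)` and `(0,1,0,−1)`. -/
def latProd : Submodule ℤ (Fin 4 → ℤ) :=
  Submodule.span ℤ {![1,0,1,0], ![1,0,-1,0], ![0,1,0,1], ![0,1,0,-1]}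

section Reduction

variable {ι : Type*}

instance ringHomSurjective_intCastRingHom_zmod (m : ℕ) :
    RingHomSurjective (Int.castRingHom (ZMod m)) :=
  ⟨ZMod.intCast_surjective⟩

/-- Coordinatewise reduction `ℤ^ι → (ℤ/m)^ι`. It is semilinear along `ℤ → ℤ/m`, so that the image
of a lattice in `ℤ^ι` is a code, that is, a `ℤ/m`-submodule of `(ℤ/m)^ι`. -/
def reduceMod (ι : Type*) (m : ℕ) : (ι → ℤ) →ₛₗ[Int.castRingHom (ZMod m)] (ι → ZMod m) where
  toFun x i := x i
  map_add' x y := by ext i; simp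
  map_smul' a x := by ext i; simp

@[simp]
theorem reduceMod_apply (m : ℕ) (x : ι → ℤ) (i : ι) : reduceMod ι m x i = x i := rfl

theorem mem_ker_reduceMod {m : ℕ} {x : ι → ℤ} :
    x ∈ LinearMap.ker (reduceMod ι m) ↔ ∀ i, (m : ℤ) ∣ x i := by
  simp [funext_iff, ZMod.intCast_zmod_eq_zero_iff_dvd]

theorem ker_reduceMod_le [Finite ι] [DecidableEq ι] {m : ℕ} {M : Submodule ℤ (ι → ℤ)}
    (hM : ∀ i, Pi.single i (m : ℤ) ∈ M) : LinearMap.ker (reduceMod ι m) ≤ M := by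
  have := Fintype.ofFinite ι
  intro x hx
  choose k hk using mem_ker_reduceMod.1 hx
  have hx_sum : x = ∑ i, k i • Pi.single i (m : ℤ) := by
    ext j
    simp [Finset.sum_apply, Pi.single_apply, hk j, mul_comm]
  rw [hx_sum]
  exact M.sum_mem fun i _ => M.smul_mem _ (hM i)

end Reduction

section Codes

variable {ι : Type*}

/-- `C` is stable under the permutations of coordinates in `G`. As `G` is a group, acting by
`c ↦ c ∘ σ` instead of `c ↦ c ∘ σ⁻¹` makes no difference. -/
def IsPermInvariant {R : Type*} [Semiring R] (G : Subgroup (Perm ι))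
    (C : Submodule R (ι → R)) : Prop :=
  ∀ σ ∈ G, ∀ c ∈ C, c ∘ σ ∈ C

theorem IsPermInvariant.eq_top_of_single_mem {R : Type*} [Semiring R] [Finite ι] [DecidableEq ι]
    {G : Subgroup (Perm ι)} [MulAction.IsPretransitive G ι] {C : Submodule R (ι → R)}
    (hC : IsPermInvariant G C) {i : ι} (hi : Pi.single i 1 ∈ C) : C = ⊤ := by
  have h_single (j : ι) : Pi.single j 1 ∈ C := by
    obtain ⟨⟨σ, hσ⟩, hσj : σ j = i⟩ := MulAction.exists_smul_eq G j i
    convert hC σ hσ _ hi using 1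
    ext k
    simp [Pi.single_apply, ← hσj]
  rw [eq_top_iff, ← (Pi.basisFun R ι).span_eq, Submodule.span_le]
  rintro _ ⟨j, rfl⟩
  simpa using h_single j

/-- The binary repetition code, consisting of the constant words. -/
def repetitionCode (ι : Type*) : Submodule (ZMod 2) (ι → ZMod 2) :=
  Submodule.span (ZMod 2) {1}

/-- The binary code of words of even Hamming weight. -/
def evenWeightCode (ι : Type*) [Fintype ι] : Submodule (ZMod 2) (ι → ZMod 2) :=
  LinearMap.ker (∑ i, LinearMap.proj i)

/-- The binary code of length `4` spanned by the indicator words of the two diagonals `{0, 2}`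
and `{1, 3}` of the square whose symmetry group is `dihedralD4`. -/
def diagonalCode : Submodule (ZMod 2) (Fin 4 → ZMod 2) :=
  Submodule.span (ZMod 2) {![1, 0, 1, 0], ![0, 1, 0, 1]}

theorem mem_repetitionCode {c : ι → ZMod 2} : c ∈ repetitionCode ι ↔ ∀ i j, c i = c j := by
  rw [repetitionCode, Submodule.mem_span_singleton]
  constructor
  · rintro ⟨a, rfl⟩ _ _
    rfl
  · intro hc
    rcases isEmpty_or_nonempty ι with _ | ⟨⟨i⟩⟩
    · exact ⟨0, Subsingleton.elim _ _⟩
    · refine ⟨c i, ?_⟩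
      ext j
      simp [hc i j]

theorem mem_evenWeightCode [Fintype ι] {c : ι → ZMod 2} :
    c ∈ evenWeightCode ι ↔ ∑ i, c i = 0 := by
  simp [evenWeightCode]

theorem mem_diagonalCode {c : Fin 4 → ZMod 2} :
    c ∈ diagonalCode ↔ c 0 = c 2 ∧ c 1 = c 3 := by
  rw [diagonalCode, Submodule.mem_span_pair]
  constructor
  · rintro ⟨a, b, rfl⟩
    simp
  · rintro ⟨h₀₂, h₁₃⟩
    refine ⟨c 0, c 1, ?_⟩
    ext i
    fin_cases i <;> simp [h₀₂, h₁₃]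

theorem eq_bot_or_eq_repetitionCode_of_le [Nonempty ι] {C : Submodule (ZMod 2) (ι → ZMod 2)}
    (hC : C ≤ repetitionCode ι) : C = ⊥ ∨ C = repetitionCode ι :=
  (nonzero_span_atom (K := ZMod 2) (1 : ι → ZMod 2) one_ne_zero).le_iff.1 hC

end Codes

section DihedralCodes

theorem swap_mul_swap_mem_dihedralD4 : swap (0 : Fin 4) 1 * swap (2 : Fin 4) 3 ∈ dihedralD4 :=
  Subgroup.subset_closure (by simp)

theorem swap_one_three_mem_dihedralD4 : swap (1 : Fin 4) 3 ∈ dihedralD4 :=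
  Subgroup.subset_closure (by simp)

instance isPretransitive_dihedralD4 : MulAction.IsPretransitive dihedralD4 (Fin 4) := by
  let a : dihedralD4 := ⟨_, swap_mul_swap_mem_dihedralD4⟩
  let b : dihedralD4 := ⟨_, swap_one_three_mem_dihedralD4⟩
  refine (MulAction.isPretransitive_iff_base (0 : Fin 4)).2 fun i => ?_
  fin_cases i
  exacts [⟨1, rfl⟩, ⟨a, rfl⟩, ⟨a * b * a, rfl⟩, ⟨b * a, rfl⟩]

theorem zmod_two_ne_iff {a b : ZMod 2} : a ≠ b ↔ a = 0 ∧ b = 1 ∨ a = 1 ∧ b = 0 := by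
  decide +revert

theorem zmod_two_add_eq_one_iff {a b : ZMod 2} : a + b = 1 ↔ a ≠ b := by
  decide +revert

theorem mem_evenWeightCode_four {c : Fin 4 → ZMod 2} :
    c ∈ evenWeightCode (Fin 4) ↔ c 0 + c 2 = c 1 + c 3 := by
  rw [mem_evenWeightCode, Fin.sum_univ_four, ← CharTwo.add_eq_zero (a := c 0 + c 2),
    add_add_add_comm (c 0) (c 2), ← add_assoc (c 0 + c 1)]

variable {C : Submodule (ZMod 2) (Fin 4 → ZMod 2)} {c : Fin 4 → ZMod 2}

theorem IsPermInvariant.swap_edges_mem (hC : IsPermInvariant dihedralD4 C) (hc : c ∈ C) :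
    ![c 1, c 0, c 3, c 2] ∈ C := by
  convert hC _ swap_mul_swap_mem_dihedralD4 c hc using 1
  ext i
  fin_cases i <;> rfl

theorem IsPermInvariant.swap_diagonal_mem (hC : IsPermInvariant dihedralD4 C) (hc : c ∈ C) :
    ![c 0, c 3, c 2, c 1] ∈ C := by
  convert hC _ swap_one_three_mem_dihedralD4 c hc using 1
  ext i
  fin_cases i <;> rfl

theorem IsPermInvariant.diagonalCode_le_of_mem (hC : IsPermInvariant dihedralD4 C)
    (h : ![0, 1, 0, 1] ∈ C) : diagonalCode ≤ C :=
  Submodule.span_le.2 (Set.pair_subset (hC.swap_edges_mem h) h)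

theorem IsPermInvariant.diagonalCode_le_of_ne (hC : IsPermInvariant dihedralD4 C) (hc : c ∈ C)
    (h : c 1 ≠ c 3) : diagonalCode ≤ C := by
  refine hC.diagonalCode_le_of_mem ?_
  convert C.add_mem hc (hC.swap_diagonal_mem hc) using 1
  ext i
  fin_cases i <;>
    simp [CharTwo.add_self_eq_zero, zmod_two_add_eq_one_iff.2 h, zmod_two_add_eq_one_iff.2 h.symm]

theorem IsPermInvariant.diagonalCode_le_of_not_le_repetitionCode (hC : IsPermInvariant dihedralD4 C)
    (h : ¬C ≤ repetitionCode (Fin 4)) : diagonalCode ≤ C := by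
  obtain ⟨c, hc, hc_rep⟩ := SetLike.not_le_iff_exists.1 h
  by_cases h₁₃ : c 1 = c 3
  swap
  · exact hC.diagonalCode_le_of_ne hc h₁₃
  by_cases h₀₂ : c 0 = c 2
  swap
  · exact hC.diagonalCode_le_of_ne (hC.swap_edges_mem hc) h₀₂
  have h₀₁ : c 0 ≠ c 1 := fun h₀₁ => hc_rep <| mem_repetitionCode.2 fun i j => by
    fin_cases i <;> fin_cases j <;> simp [← h₁₃, ← h₀₂, h₀₁]
  have hc_eq : c = ![c 0, c 1, c 0, c 1] := by
    ext i
    fin_cases i <;> simp [h₁₃, h₀₂]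
  refine hC.diagonalCode_le_of_mem ?_
  rcases zmod_two_ne_iff.1 h₀₁ with ⟨h₀, h₁⟩ | ⟨h₀, h₁⟩
  · rwa [hc_eq, h₀, h₁] at hc
  · rw [hc_eq, h₀, h₁] at hc
    exact hC.swap_edges_mem hc

theorem diagonal_reduction_mem (h : diagonalCode ≤ C) (hc : c ∈ C) :
    ![c 0 + c 2, c 1 + c 3, 0, 0] ∈ C := by
  have h_diag : ![c 2, c 3, c 2, c 3] ∈ diagonalCode := mem_diagonalCode.2 ⟨rfl, rfl⟩
  convert C.add_mem hc (h h_diag) using 1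
  ext i
  fin_cases i <;> simp [CharTwo.add_self_eq_zero]

theorem evenWeightCode_le_of_not_le_diagonalCode (h_diag : diagonalCode ≤ C)
    (h_even : C ≤ evenWeightCode (Fin 4)) (h : ¬C ≤ diagonalCode) : evenWeightCode (Fin 4) ≤ C := by
  obtain ⟨c, hc, hc_diag⟩ := SetLike.not_le_iff_exists.1 h
  have h_edge : ![1, 1, 0, 0] ∈ C := by
    have hc_even := mem_evenWeightCode_four.1 (h_even hc)
    have h₀₂ : c 0 + c 2 = 1 := zmod_two_add_eq_one_iff.2 fun h₀₂ => hc_diag <| mem_diagonalCode.2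
      ⟨h₀₂, CharTwo.add_eq_zero.1 (hc_even ▸ CharTwo.add_eq_zero.2 h₀₂)⟩
    simpa [← hc_even, h₀₂] using diagonal_reduction_mem h_diag hc
  intro d hd
  have hd_diag : ![d 2, d 3, d 2, d 3] ∈ diagonalCode := mem_diagonalCode.2 ⟨rfl, rfl⟩
  convert C.add_mem (C.smul_mem (d 0 + d 2) h_edge) (h_diag hd_diag) using 1
  ext i
  fin_cases i
  · simp [add_assoc, CharTwo.add_self_eq_zero]
  · simp [mem_evenWeightCode_four.1 hd, add_assoc, CharTwo.add_self_eq_zero]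
  · simp
  · simp

theorem IsPermInvariant.eq_top_of_not_le_evenWeightCode (hC : IsPermInvariant dihedralD4 C)
    (h_diag : diagonalCode ≤ C) (h : ¬C ≤ evenWeightCode (Fin 4)) : C = ⊤ := by
  obtain ⟨c, hc, hc_odd⟩ := SetLike.not_le_iff_exists.1 h
  have h_word := diagonal_reduction_mem h_diag hc
  rcases zmod_two_ne_iff.1 (mem_evenWeightCode_four.not.1 hc_odd) with
    ⟨h₀₂, h₁₃⟩ | ⟨h₀₂, h₁₃⟩
  · refine hC.eq_top_of_single_mem (i := 1) ?_
    convert h_word using 1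
    ext i
    fin_cases i <;> simp [h₀₂, h₁₃]
  · refine hC.eq_top_of_single_mem (i := 0) ?_
    convert h_word using 1
    ext i
    fin_cases i <;> simp [h₀₂, h₁₃]

theorem IsPermInvariant.dihedralD4_cases (hC : IsPermInvariant dihedralD4 C) :
    C = ⊥ ∨ C = repetitionCode (Fin 4) ∨ C = diagonalCode ∨ C = evenWeightCode (Fin 4) ∨
      C = ⊤ := by
  by_cases h_rep : C ≤ repetitionCode (Fin 4)
  · exact (eq_bot_or_eq_repetitionCode_of_le h_rep).imp_right Or.inl
  have h_diag := hC.diagonalCode_le_of_not_le_repetitionCode h_rep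
  by_cases h_le_diag : C ≤ diagonalCode
  · exact .inr <| .inr <| .inl <| h_le_diag.antisymm h_diag
  by_cases h_even : C ≤ evenWeightCode (Fin 4)
  · exact .inr <| .inr <| .inr <| .inl <|
      h_even.antisymm (evenWeightCode_le_of_not_le_diagonalCode h_diag h_even h_le_diag)
  · exact .inr <| .inr <| .inr <| .inr <| hC.eq_top_of_not_le_evenWeightCode h_diag h_even

end DihedralCodes

section CodeLattices

theorem comap_reduceMod_evenWeightCode (n : ℕ) :
    (evenWeightCode (Fin n)).comap (reduceMod (Fin n) 2) = Dlat n := by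
  ext x
  change reduceMod (Fin n) 2 x ∈ evenWeightCode (Fin n) ↔ (2 : ℤ) ∣ ∑ i, x i
  simpa [mem_evenWeightCode] using ZMod.intCast_zmod_eq_zero_iff_dvd (∑ i, x i) 2

theorem comap_reduceMod_repetitionCode (n : ℕ) :
    (repetitionCode (Fin n)).comap (reduceMod (Fin n) 2) = sameParity n := by
  ext x
  rw [Submodule.mem_comap, mem_repetitionCode, forall_comm]
  exact forall₂_congr fun i j => ZMod.intCast_eq_intCast_iff_dvd_sub (x j) (x i) 2

theorem single_two_mem_latProd (i : Fin 4) : Pi.single i 2 ∈ latProd := by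
  have h₀₂ : ![1, 0, 1, 0] ∈ latProd := Submodule.subset_span (by simp)
  have h₀₂' : ![1, 0, -1, 0] ∈ latProd := Submodule.subset_span (by simp)
  have h₁₃ : ![0, 1, 0, 1] ∈ latProd := Submodule.subset_span (by simp)
  have h₁₃' : ![0, 1, 0, -1] ∈ latProd := Submodule.subset_span (by simp)
  fin_cases i
  · convert latProd.add_mem h₀₂ h₀₂' using 1
    decide
  · convert latProd.add_mem h₁₃ h₁₃' using 1
    decide
  · convert latProd.sub_mem h₀₂ h₀₂' using 1
    decide
  · convert latProd.sub_mem h₁₃ h₁₃' using 1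
    decide

theorem comap_reduceMod_diagonalCode :
    diagonalCode.comap (reduceMod (Fin 4) 2) = latProd := by
  have h_map : latProd.map (reduceMod (Fin 4) 2) = diagonalCode := by
    have h₀₂ : reduceMod (Fin 4) 2 ![1, 0, 1, 0] = ![1, 0, 1, 0] := by decide
    have h₀₂' : reduceMod (Fin 4) 2 ![1, 0, -1, 0] = ![1, 0, 1, 0] := by decide
    have h₁₃ : reduceMod (Fin 4) 2 ![0, 1, 0, 1] = ![0, 1, 0, 1] := by decide
    have h₁₃' : reduceMod (Fin 4) 2 ![0, 1, 0, -1] = ![0, 1, 0, 1] := by decide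
    rw [latProd, Submodule.map_span, diagonalCode]
    simp [Set.image_insert_eq, h₀₂, h₀₂', h₁₃, h₁₃']
  rw [← h_map]
  exact Submodule.comap_map_eq_self (ker_reduceMod_le single_two_mem_latProd)

end CodeLattices

section InvariantLattices

variable {n : ℕ} {G : Subgroup (Perm (Fin n))} {Λ : Submodule ℤ (Fin n → ℤ)}

/-- `Λ` is stable under the signed permutation group `C₂ⁿ ⋊ G`. -/
def IsSignedPermInvariant (G : Subgroup (Perm (Fin n))) (Λ : Submodule ℤ (Fin n → ℤ)) : Prop :=
  ∀ v, ∀ σ ∈ G, ∀ x ∈ Λ, signedPerm v σ x ∈ Λ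

namespace IsSignedPermInvariant

theorem comp_mem (hΛ : IsSignedPermInvariant G Λ) {σ : Perm (Fin n)} (hσ : σ ∈ G)
    {x : Fin n → ℤ} (hx : x ∈ Λ) : x ∘ σ ∈ Λ := by
  convert hΛ 1 σ⁻¹ (inv_mem hσ) x hx using 1
  ext i
  simp [signedPerm, Perm.inv_def]

theorem comap_smul (hΛ : IsSignedPermInvariant G Λ) (d : ℤ) :
    IsSignedPermInvariant G (Λ.comap (d • LinearMap.id)) := by
  intro v σ hσ x hx
  have h_comm : d • signedPerm v σ x = signedPerm v σ (d • x) := by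
    ext i
    simp [signedPerm, mul_left_comm]
  change d • signedPerm v σ x ∈ Λ
  rw [h_comm]
  exact hΛ v σ hσ _ hx

theorem map_reduceMod (hΛ : IsSignedPermInvariant G Λ) (m : ℕ) :
    IsPermInvariant G (Λ.map (reduceMod (Fin n) m)) := by
  rintro σ hσ _ ⟨x, hx, rfl⟩
  exact ⟨x ∘ σ, hΛ.comp_mem hσ hx, rfl⟩

theorem single_two_mul_mem (hΛ : IsSignedPermInvariant G Λ) {x : Fin n → ℤ} (hx : x ∈ Λ)
    (i : Fin n) : Pi.single i (2 * x i) ∈ Λ := by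
  convert Λ.sub_mem hx (hΛ (Function.update 1 i (-1)) 1 (one_mem G) x hx) using 1
  ext j
  rcases eq_or_ne j i with rfl | hji
  · simp [signedPerm, Perm.one_def, two_mul]
  · simp [signedPerm, Perm.one_def, hji]

variable [MulAction.IsPretransitive G (Fin n)]

theorem exists_mem_apply_eq (hΛ : IsSignedPermInvariant G Λ) {x : Fin n → ℤ} (hx : x ∈ Λ)
    (i j : Fin n) : ∃ y ∈ Λ, y j = x i := by
  obtain ⟨⟨σ, hσ⟩, hσj : σ j = i⟩ := MulAction.exists_smul_eq G j i
  exact ⟨x ∘ σ, hΛ.comp_mem hσ hx, congrArg x hσj⟩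

theorem exists_dvd [NeZero n] (hΛ : IsSignedPermInvariant G Λ) :
    ∃ x ∈ Λ, ∀ y ∈ Λ, ∀ i, x 0 ∣ y i := by
  let I : Ideal ℤ := Λ.map (LinearMap.proj 0)
  obtain ⟨x, hx, hx₀ : x 0 = _⟩ := Submodule.IsPrincipal.generator_mem I
  refine ⟨x, hx, fun y hy i => ?_⟩
  obtain ⟨z, hz, hz₀⟩ := hΛ.exists_mem_apply_eq hy i 0
  rw [hx₀, ← hz₀, ← Submodule.IsPrincipal.mem_iff_generator_dvd I]
  exact ⟨z, hz, rfl⟩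

theorem exists_eq_scl_primitive [NeZero n] (hΛ : IsSignedPermInvariant G Λ) :
    ∃ (d : ℤ) (M : Submodule ℤ (Fin n → ℤ)),
      IsSignedPermInvariant G M ∧ (∃ x ∈ M, x 0 = 1) ∧ Λ = scl d M := by
  obtain ⟨x, hx, h_dvd⟩ := hΛ.exists_dvd
  refine ⟨x 0, Λ.comap (x 0 • LinearMap.id), hΛ.comap_smul _, ?_, ?_⟩
  · choose k hk using h_dvd x hx
    -- `k 0` is arbitrary when `x 0 = 0`.
    refine ⟨Function.update k 0 1, ?_, by simp⟩
    have h_smul : x 0 • Function.update k 0 1 = x := by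
      ext i
      rcases eq_or_ne i 0 with rfl | hi
      · simp
      · simp [hi, ← hk]
    change x 0 • Function.update k 0 1 ∈ Λ
    rwa [h_smul]
  · refine (Submodule.map_comap_eq_self fun y hy => ?_).symm
    choose k hk using h_dvd y hy
    exact ⟨k, funext fun i => (hk i).symm⟩

theorem ker_reduceMod_two_le (hΛ : IsSignedPermInvariant G Λ) {x : Fin n → ℤ} (hx : x ∈ Λ)
    {i : Fin n} (hxi : x i = 1) : LinearMap.ker (reduceMod (Fin n) 2) ≤ Λ := by
  refine ker_reduceMod_le fun j => ?_
  obtain ⟨y, hy, hyj⟩ := hΛ.exists_mem_apply_eq hx i j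
  simpa [hyj, hxi] using hΛ.single_two_mul_mem hy j

theorem exists_eq_scl_comap_reduceMod [NeZero n] (hΛ : IsSignedPermInvariant G Λ) :
    ∃ (d : ℤ) (C : Submodule (ZMod 2) (Fin n → ZMod 2)),
      IsPermInvariant G C ∧ C ≠ ⊥ ∧ Λ = scl d (C.comap (reduceMod (Fin n) 2)) := by
  obtain ⟨d, M, hM, ⟨x, hx, hx₀⟩, rfl⟩ := hΛ.exists_eq_scl_primitive
  refine ⟨d, M.map (reduceMod (Fin n) 2), hM.map_reduceMod 2, ?_, ?_⟩
  · refine Submodule.ne_bot_iff _ |>.2 ⟨_, Submodule.mem_map_of_mem hx, fun h => ?_⟩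
    simpa [hx₀] using congrFun h 0
  · rw [Submodule.comap_map_eq_self (hM.ker_reduceMod_two_le hx hx₀)]

end IsSignedPermInvariant

end InvariantLattices

/-- A full-rank lattice `Λ ⊆ ℤ⁴` invariant under `C₂⁴ ⋊ D₄` is an integer multiple of
`ℤ⁴`, `D₄`-lattice, the same-parity lattice, or `Λ_{(1,1)} × Λ_{(1,1)}`. -/
theorem lattices_invariant_under_C2D4
    (Λ : Submodule ℤ (Fin 4 → ℤ)) (hfull : IsFullLattice Λ)
    (hinv : ∀ (v : Fin 4 → ℤˣ) (σ : Perm (Fin 4)), σ ∈ dihedralD4 →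
      ∀ x ∈ Λ, signedPerm v σ x ∈ Λ) :
    ∃ s : ℤ, Λ = scl s ⊤ ∨ Λ = scl s (Dlat 4) ∨ Λ = scl s (sameParity 4) ∨
      Λ = scl s latProd := by
  have hΛ : IsSignedPermInvariant dihedralD4 Λ := hinv
  obtain ⟨d, C, hC, hC_ne_bot, rfl⟩ := hΛ.exists_eq_scl_comap_reduceMod
  refine ⟨d, ?_⟩
  rcases hC.dihedralD4_cases with rfl | rfl | rfl | rfl | rfl
  · exact absurd rfl hC_ne_bot
  · exact .inr <| .inr <| .inl <| by rw [comap_reduceMod_repetitionCode]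
  · exact .inr <| .inr <| .inr <| by rw [comap_reduceMod_diagonalCode]
  · exact .inr <| .inl <| by rw [comap_reduceMod_evenWeightCode]
  · exact .inl <| by rw [Submodule.comap_top]
end
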